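/- arXiv:1207.2008 — 2 statements merged into one kernel-verified Lean document; each statement's English description precedes it below -/
import Mathlib

section
/- For every n ≥ 1, the number of down-up permutations σ = σ_1…σ_{2n+1} of length 2n+1 with mmp^{(1,0,∅,0)}(σ) + χ(σ_1 = 2n+1) = n equals (1/3)·(n²−1)·(2n)!!. (Equivalently, the coefficient of x^n in D̄^{(1,0,∅,0)}_{2n+1}(x) is (n²−1)((2n)!!)/3.) -/
/-- A permutation `σ` of `{1,…,n}` (as a permutation of `Fin n`) is up-down if
`σ_1 < σ_2 > σ_3 < σ_4 > ⋯`. -/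
def UpDown {n : ℕ} (σ : Equiv.Perm (Fin n)) : Prop :=
  ∀ i : Fin n, ∀ h : i.val + 1 < n,
    if Even i.val then σ i < σ ⟨i.val + 1, h⟩ else σ ⟨i.val + 1, h⟩ < σ i

/-- A permutation is down-up if `σ_1 > σ_2 < σ_3 > σ_4 < ⋯`. -/
def DownUp {n : ℕ} (σ : Equiv.Perm (Fin n)) : Prop :=
  ∀ i : Fin n, ∀ h : i.val + 1 < n,
    if Even i.val then σ ⟨i.val + 1, h⟩ < σ i else σ i < σ ⟨i.val + 1, h⟩

/-- `σ_i` matches `MMP(1,0,∅,0)`: there exists `j > i` with `σ_j > σ_i` and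
there is no `j < i` with `σ_j < σ_i`. -/
def Matches1 {n : ℕ} (σ : Equiv.Perm (Fin n)) (i : Fin n) : Prop :=
  (∃ j, i < j ∧ σ i < σ j) ∧ ¬ ∃ j, j < i ∧ σ j < σ i

/-- `mmp^{(1,0,∅,0)}(σ)`: the number of indices matching `MMP(1,0,∅,0)` in `σ`. -/
noncomputable def mmp1 {n : ℕ} (σ : Equiv.Perm (Fin n)) : ℕ :=
  {i : Fin n | Matches1 σ i}.ncard

/-- The odd double factorial `(2n−1)!! = ∏_{i=1}^{n} (2i−1)`. -/
def oddDF (n : ℕ) : ℕ := ∏ i ∈ Finset.range n, (2*i+1)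

/-- The even double factorial `(2n)!! = ∏_{i=1}^{n} 2i`. -/
def evenDF (n : ℕ) : ℕ := ∏ i ∈ Finset.range n, (2*i+2)

/-- The statistic `mmp^{(1,0,∅,0)}(σ) + χ(σ_1 = 2n+1)` on permutations of length `2n+1`:
the indicator adds 1 when the first entry is the largest value `2n+1`
(i.e. `2*n` as an element of `Fin (2n+1)`). -/
noncomputable def dbarStat (n : ℕ) (σ : Equiv.Perm (Fin (2*n+1))) : ℕ :=
  mmp1 σ + if (σ ⟨0, by omega⟩).val = 2*n then 1 else 0

/-!
On a down-up permutation of odd length, the statistic is the number of left-to-right minima: every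
left-to-right minimum after the first position is a valley, hence followed by a larger entry, while
the first position fails to match exactly when `χ` compensates for it.

Down-up permutations are built by appending a last value and shifting the earlier ones. Appending
two values `u`, `v` to a permutation of odd length ending in `w` requires `u ≤ w` and `u < v`, and
creates a new left-to-right minimum exactly when `u = 0`. Counting the choices of `u`, the numbers
`a m v k` of down-up permutations of length `m + 1` with last value `v` and `k` minima satisfy
`a (m + 2) (v + 1) (k + 1) = ∑ w, a m w k + ∑ w, min v w * a m w (k + 1)` for even `m`. Since there
are at most `n + 1` minima in length `2 * n + 1`, this recursion determines the counts for `n + 1`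
minima, then those for `n` minima.
-/

open Finset Equiv

instance DownUp.decidable {n : ℕ} (σ : Perm (Fin n)) : Decidable (DownUp σ) :=
  inferInstanceAs <| Decidable (∀ i : Fin n, ∀ h : i.val + 1 < n,
    if Even i.val then σ ⟨i.val + 1, h⟩ < σ i else σ i < σ ⟨i.val + 1, h⟩)

instance Matches1.decidablePred {n : ℕ} (σ : Perm (Fin n)) : DecidablePred (Matches1 σ) := fun i =>
  inferInstanceAs <| Decidable ((∃ j, i < j ∧ σ i < σ j) ∧ ¬ ∃ j, j < i ∧ σ j < σ i)

theorem downUp_iff_forall_succ {n : ℕ} {σ : Perm (Fin (n + 1))} :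
    DownUp σ ↔ ∀ i : Fin n,
      if Even i.val then σ i.succ < σ i.castSucc else σ i.castSucc < σ i.succ :=
  ⟨fun h i => h i.castSucc (Nat.succ_lt_succ i.isLt),
    fun h i hi => h ⟨i, Nat.lt_of_succ_lt_succ hi⟩⟩

/-- The position `i` is a left-to-right minimum (also called a record) of `σ`: its entry is smaller
than all entries before it. -/
def IsLeftToRightMin {n : ℕ} (σ : Perm (Fin n)) (i : Fin n) : Prop :=
  ∀ j < i, σ i < σ j

instance IsLeftToRightMin.decidablePred {n : ℕ} (σ : Perm (Fin n)) :
    DecidablePred (IsLeftToRightMin σ) := fun i =>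
  inferInstanceAs <| Decidable (∀ j < i, σ i < σ j)

/-- The number of left-to-right minima of `σ`, the statistic that replaces `dbarStat` in the
counting. -/
def numLeftToRightMin {n : ℕ} (σ : Perm (Fin n)) : ℕ :=
  #{i | IsLeftToRightMin σ i}

theorem isLeftToRightMin_zero {n : ℕ} (σ : Perm (Fin (n + 1))) : IsLeftToRightMin σ 0 :=
  fun j hj => absurd hj (Fin.not_lt_zero j)

theorem matches1_iff {n : ℕ} {σ : Perm (Fin n)} {i : Fin n} :
    Matches1 σ i ↔ (∃ j, i < j ∧ σ i < σ j) ∧ IsLeftToRightMin σ i := by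
  refine and_congr_right fun _ => ?_
  push Not
  exact forall₂_congr fun j hj => (σ.injective.ne hj.ne').le_iff_lt

theorem matches1_zero_iff {n : ℕ} {σ : Perm (Fin (n + 1))} : Matches1 σ 0 ↔ σ 0 ≠ Fin.last n := by
  rw [matches1_iff, and_iff_left (isLeftToRightMin_zero σ), ← Fin.lt_last_iff_ne_last]
  refine ⟨fun ⟨j, _, hj⟩ => hj.trans_le (Fin.le_last _), fun h => ⟨σ.symm (Fin.last n), ?_, ?_⟩⟩
  · refine Fin.pos_iff_ne_zero.2 fun h0 => h.ne ?_
    rw [← h0, apply_symm_apply]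
  · rwa [apply_symm_apply]

theorem DownUp.exists_gt_of_isLeftToRightMin_succ {n : ℕ} (hn : Even n) {σ : Perm (Fin (n + 1))}
    (hσ : DownUp σ) {i : Fin n} (hi : IsLeftToRightMin σ i.succ) :
    ∃ j, i.succ < j ∧ σ i.succ < σ j := by
  rw [downUp_iff_forall_succ] at hσ
  have descent : σ i.succ < σ i.castSucc := hi _ Fin.castSucc_lt_succ
  have even_i : Even i.val := by
    by_contra h
    have ascent := hσ i
    rw [if_neg h] at ascent
    exact descent.asymm ascent
  have succ_lt : i.val + 1 < n := by grind
  have ascent := hσ ⟨i + 1, succ_lt⟩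
  rw [if_neg (by simpa [Nat.even_add_one] using even_i)] at ascent
  exact ⟨_, Fin.castSucc_lt_succ (i := ⟨i + 1, succ_lt⟩), ascent⟩

theorem DownUp.dbarStat_eq_numLeftToRightMin {n : ℕ} {σ : Perm (Fin (2 * n + 1))} (hσ : DownUp σ) :
    dbarStat n σ = numLeftToRightMin σ := by
  have matches_succ (i : Fin (2 * n)) : Matches1 σ i.succ ↔ IsLeftToRightMin σ i.succ :=
    matches1_iff.trans <| and_iff_right_of_imp <|
      hσ.exists_gt_of_isLeftToRightMin_succ (even_two_mul n)
  have first_is_max : (σ ⟨0, by omega⟩).val = 2 * n ↔ σ 0 = Fin.last (2 * n) := by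
    rw [Fin.ext_iff, Fin.val_last, Fin.mk_zero]
  simp only [dbarStat, mmp1, numLeftToRightMin, Set.ncard_eq_toFinset_card', Set.toFinset_ofPred,
    card_filter, Fin.sum_univ_succ, matches_succ, matches1_zero_iff, isLeftToRightMin_zero,
    first_is_max]
  split_ifs <;> first | contradiction | omega

/-- The permutation whose last entry is `v` and whose other entries are ordered as in `τ`: the
values of `τ` that are at least `v` are shifted up by one. -/
def snocPerm {m : ℕ} (v : Fin (m + 1)) (τ : Perm (Fin m)) : Perm (Fin (m + 1)) :=
  finSuccEquivLast.trans (τ.optionCongr.trans (finSuccEquiv' v).symm)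

@[simp]
theorem snocPerm_last {m : ℕ} (v : Fin (m + 1)) (τ : Perm (Fin m)) :
    snocPerm v τ (Fin.last m) = v := by
  simp [snocPerm]

@[simp]
theorem snocPerm_castSucc {m : ℕ} (v : Fin (m + 1)) (τ : Perm (Fin m)) (i : Fin m) :
    snocPerm v τ i.castSucc = v.succAbove (τ i) := by
  simp [snocPerm]

theorem snocPerm_bijective (m : ℕ) :
    Function.Bijective fun p : Fin (m + 1) × Perm (Fin m) => snocPerm p.1 p.2 := by
  refine (Fintype.bijective_iff_injective_and_card _).2 ⟨?_, ?_⟩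
  · rintro ⟨v, τ⟩ ⟨w, ρ⟩ h
    have apply_eq (i : Fin (m + 1)) : snocPerm v τ i = snocPerm w ρ i := DFunLike.congr_fun h i
    obtain rfl : v = w := by simpa using apply_eq (Fin.last m)
    have : τ = ρ := Equiv.ext fun i => by simpa using apply_eq i.castSucc
    rw [this]
  · simp [Fintype.card_perm, Nat.factorial_succ]

theorem downUp_snocPerm {m : ℕ} {v : Fin (m + 2)} {τ : Perm (Fin (m + 1))} :
    DownUp (snocPerm v τ) ↔ DownUp τ ∧
      if Even m then v ≤ (τ (Fin.last m)).castSucc else (τ (Fin.last m)).castSucc < v := by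
  simp only [downUp_iff_forall_succ, Fin.forall_fin_succ', Fin.succ_castSucc, Fin.succ_last,
    snocPerm_castSucc, snocPerm_last, Fin.succAbove_lt_succAbove_iff, Fin.val_castSucc,
    Fin.val_last, Fin.lt_succAbove_iff_le_castSucc, Fin.succAbove_lt_iff_castSucc_lt]

theorem isLeftToRightMin_snocPerm_castSucc {m : ℕ} {v : Fin (m + 1)} {τ : Perm (Fin m)}
    {i : Fin m} : IsLeftToRightMin (snocPerm v τ) i.castSucc ↔ IsLeftToRightMin τ i := by
  simp [IsLeftToRightMin, Fin.forall_fin_succ', Fin.succAbove_lt_succAbove_iff,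
    (Fin.castSucc_lt_last i).not_gt]

theorem isLeftToRightMin_snocPerm_last {m : ℕ} {v : Fin (m + 1)} {τ : Perm (Fin m)} :
    IsLeftToRightMin (snocPerm v τ) (Fin.last m) ↔ v = 0 := by
  constructor
  · intro h
    obtain ⟨j, hj⟩ := (snocPerm v τ).surjective 0
    obtain rfl : j = Fin.last m := by
      by_contra hne
      exact Fin.not_lt_zero _ (hj ▸ h j (Fin.lt_last_iff_ne_last.2 hne))
    rwa [snocPerm_last] at hj
  · rintro rfl j hj
    have hne := (snocPerm 0 τ).injective.ne hj.ne
    rw [snocPerm_last] at hne ⊢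
    exact Fin.pos_iff_ne_zero.2 hne

theorem numLeftToRightMin_snocPerm {m : ℕ} (v : Fin (m + 1)) (τ : Perm (Fin m)) :
    numLeftToRightMin (snocPerm v τ) = numLeftToRightMin τ + if v = 0 then 1 else 0 := by
  simp only [numLeftToRightMin, card_filter, Fin.sum_univ_castSucc,
    isLeftToRightMin_snocPerm_castSucc, isLeftToRightMin_snocPerm_last]

/-- The number of down-up permutations of length `m + 1` with `k` left-to-right minima. -/
def downUpCount (m k : ℕ) : ℕ :=
  #{σ : Perm (Fin (m + 1)) | DownUp σ ∧ numLeftToRightMin σ = k}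

/-- The number of down-up permutations of length `m + 1` with last entry `v` and `k` left-to-right
minima, the refinement of `downUpCount` that satisfies a recursion. -/
def downUpCountLast (m : ℕ) (v : Fin (m + 1)) (k : ℕ) : ℕ :=
  #{σ : Perm (Fin (m + 1)) | DownUp σ ∧ numLeftToRightMin σ = k ∧ σ (Fin.last m) = v}

theorem card_filter_last_mem_eq_sum_downUpCountLast (m k : ℕ) (s : Finset (Fin (m + 1))) :
    #{σ : Perm (Fin (m + 1)) | DownUp σ ∧ numLeftToRightMin σ = k ∧ σ (Fin.last m) ∈ s} =
      ∑ v ∈ s, downUpCountLast m v k := by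
  rw [card_eq_sum_card_fiberwise (f := fun σ => σ (Fin.last m)) (t := s)]
  · refine sum_congr rfl fun v hv => congrArg card ?_
    grind
  · intro σ hσ
    exact (mem_filter.1 hσ).2.2.2

theorem sum_downUpCountLast (m k : ℕ) : ∑ v, downUpCountLast m v k = downUpCount m k := by
  simp only [← card_filter_last_mem_eq_sum_downUpCountLast, mem_univ, and_true, downUpCount]

theorem downUpCountLast_eq_zero {m k : ℕ} (h : downUpCount m k = 0) (v : Fin (m + 1)) :
    downUpCountLast m v k = 0 := by
  rw [← sum_downUpCountLast] at h
  exact sum_eq_zero_iff.1 h v (mem_univ v)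

theorem downUpCountLast_succ (m : ℕ) (v : Fin (m + 2)) (k : ℕ) :
    downUpCountLast (m + 1) v k =
      #{τ : Perm (Fin (m + 1)) | DownUp (snocPerm v τ) ∧ numLeftToRightMin (snocPerm v τ) = k} := by
  symm
  refine card_bij (fun τ _ => snocPerm v τ) ?_ ?_ ?_
  · simp
  · intro τ _ ρ _ h
    exact (Prod.ext_iff.1 ((snocPerm_bijective _).1 (a₁ := (v, τ)) (a₂ := (v, ρ)) h)).2
  · intro σ hσ
    obtain ⟨⟨w, τ⟩, rfl⟩ := (snocPerm_bijective _).2 σ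
    obtain ⟨hdu, hmin, hlast⟩ := (mem_filter.1 hσ).2
    obtain rfl : w = v := by rwa [snocPerm_last] at hlast
    exact ⟨τ, by simp [hdu, hmin], rfl⟩

section Recursion

variable {m : ℕ}

theorem downUpCountLast_succ_zero_of_even (hm : Even m) (k : ℕ) :
    downUpCountLast (m + 1) 0 (k + 1) = downUpCount m k := by
  simp [downUpCountLast_succ, downUp_snocPerm, numLeftToRightMin_snocPerm, hm, downUpCount]

theorem downUpCountLast_succ_succ_of_even (hm : Even m) (v : Fin (m + 1)) (k : ℕ) :
    downUpCountLast (m + 1) v.succ k = ∑ w ∈ Ioi v, downUpCountLast m w k := by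
  simp only [downUpCountLast_succ, downUp_snocPerm, numLeftToRightMin_snocPerm, hm, if_true,
    Fin.succ_ne_zero, if_false, add_zero, Fin.succ_le_castSucc_iff, and_right_comm, and_assoc,
    ← card_filter_last_mem_eq_sum_downUpCountLast, mem_Ioi]

theorem downUpCountLast_succ_zero_of_odd (hm : Odd m) (k : ℕ) :
    downUpCountLast (m + 1) 0 k = 0 := by
  simp [downUpCountLast_succ, downUp_snocPerm, Nat.not_even_iff_odd.2 hm]

theorem downUpCountLast_succ_succ_of_odd (hm : Odd m) (v : Fin (m + 1)) (k : ℕ) :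
    downUpCountLast (m + 1) v.succ k = ∑ u ∈ Iic v, downUpCountLast m u k := by
  simp only [downUpCountLast_succ, downUp_snocPerm, numLeftToRightMin_snocPerm,
    Nat.not_even_iff_odd.2 hm, Fin.succ_ne_zero, if_false, add_zero, Fin.castSucc_lt_succ_iff,
    and_right_comm, and_assoc, ← card_filter_last_mem_eq_sum_downUpCountLast, mem_Iic]

theorem downUpCountLast_add_two_succ (hm : Even m) (v : Fin (m + 2)) (k : ℕ) :
    downUpCountLast (m + 2) v.succ (k + 1) =
      downUpCount m k + ∑ w : Fin (m + 1), min v.val w.val * downUpCountLast m w (k + 1) := by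
  have card_middle (w : Fin (m + 1)) :
      #{u : Fin (m + 1) | u.succ ≤ v ∧ u < w} = min v.val w.val := by
    have lt_min (u : Fin (m + 1)) : u.succ ≤ v ∧ u < w ↔ u.val < min v.val w.val := by
      rw [lt_min_iff]
      rfl
    simp only [lt_min, Fin.card_filter_val_lt]
    omega
  calc downUpCountLast (m + 2) v.succ (k + 1)
      = ∑ u ∈ Iic v, downUpCountLast (m + 1) u (k + 1) :=
        downUpCountLast_succ_succ_of_odd hm.add_one v _
    _ = downUpCount m k + ∑ u : Fin (m + 1) with u.succ ≤ v,
          ∑ w ∈ Ioi u, downUpCountLast m w (k + 1) := by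
        rw [← filter_ge_eq_Iic, sum_filter, Fin.sum_univ_succ, if_pos (Fin.zero_le v),
          downUpCountLast_succ_zero_of_even hm, ← sum_filter]
        simp only [downUpCountLast_succ_succ_of_even hm]
    _ = downUpCount m k + ∑ w : Fin (m + 1), ∑ u : Fin (m + 1) with u.succ ≤ v ∧ u < w,
          downUpCountLast m w (k + 1) := by
        congr 1
        exact sum_comm' (by simp)
    _ = _ := by simp only [sum_const, card_middle, smul_eq_mul]

theorem downUpCount_add_two (hm : Even m) (k : ℕ) :
    downUpCount (m + 2) (k + 1) = (m + 2) * downUpCount m k +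
      ∑ v : Fin (m + 2), ∑ w : Fin (m + 1), min v.val w.val * downUpCountLast m w (k + 1) := by
  simp only [← sum_downUpCountLast (m + 2), Fin.sum_univ_succ (n := m + 2),
    downUpCountLast_succ_zero_of_odd hm.add_one, downUpCountLast_add_two_succ hm,
    sum_add_distrib, sum_const, card_univ, Fintype.card_fin, smul_eq_mul, zero_add]

end Recursion

theorem downUpCount_zero (k : ℕ) : downUpCount 0 k = if k = 1 then 1 else 0 := by
  have downUp (σ : Perm (Fin 1)) : DownUp σ := fun i hi => by omega
  have numMin (σ : Perm (Fin 1)) : numLeftToRightMin σ = 1 := by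
    simp [numLeftToRightMin, Fin.eq_zero, isLeftToRightMin_zero]
  simp [downUpCount, downUp, numMin, eq_comm, apply_ite card, filter_const]

theorem downUpCount_eq_zero_of_add_one_lt {n k : ℕ} (h : n + 1 < k) :
    downUpCount (2 * n) k = 0 := by
  induction n generalizing k with
  | zero => rw [mul_zero, downUpCount_zero, if_neg (by omega)]
  | succ n ih =>
    obtain ⟨k, rfl⟩ := Nat.exists_eq_add_one_of_ne_zero (by omega : k ≠ 0)
    rw [Nat.mul_succ, downUpCount_add_two (even_two_mul n), ih (by omega)]
    simp [downUpCountLast_eq_zero (ih (k := k + 1) (by omega))]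

theorem downUpCount_add_one_eq_evenDF (n : ℕ) : downUpCount (2 * n) (n + 1) = evenDF n := by
  induction n with
  | zero => simp [downUpCount_zero, evenDF]
  | succ n ih =>
    rw [Nat.mul_succ, downUpCount_add_two (even_two_mul n), ih]
    simp [downUpCountLast_eq_zero (downUpCount_eq_zero_of_add_one_lt (n + 1).lt_succ_self),
      evenDF, prod_range_succ, mul_comm]

theorem downUpCountLast_succ_eq_evenDF (n : ℕ) (v : Fin (2 * n + 2)) :
    downUpCountLast (2 * n + 2) v.succ (n + 2) = evenDF n := by
  rw [downUpCountLast_add_two_succ (even_two_mul n), downUpCount_add_one_eq_evenDF]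
  simp [downUpCountLast_eq_zero (downUpCount_eq_zero_of_add_one_lt (n + 1).lt_succ_self)]

theorem three_mul_sum_range_sum_range_min (n : ℕ) :
    3 * ∑ v ∈ range (n + 2), ∑ w ∈ range (n + 1), min v w = n * (n + 1) * (n + 2) := by
  induction n with
  | zero => simp
  | succ n ih =>
    have column : ∑ v ∈ range (n + 2), min v (n + 1) = ∑ v ∈ range (n + 2), v :=
      sum_congr rfl fun v hv => min_eq_left (by grind)
    have row : ∑ w ∈ range (n + 2), min (n + 2) w = ∑ w ∈ range (n + 2), w :=
      sum_congr rfl fun w hw => min_eq_right (by grind)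
    have gauss : (∑ v ∈ range (n + 2), v) * 2 = (n + 2) * (n + 1) := sum_range_id_mul_two (n + 2)
    have split (v : ℕ) :
        ∑ w ∈ range (n + 2), min v w = ∑ w ∈ range (n + 1), min v w + min v (n + 1) :=
      sum_range_succ _ _
    rw [sum_range_succ, row, sum_congr rfl fun v _ => split v, sum_add_distrib, column]
    linarith

theorem downUpCount_two_mul_add_four (n : ℕ) :
    downUpCount (2 * n + 4) (n + 2) = (2 * n + 4) * downUpCount (2 * n + 2) (n + 1) +
      evenDF n * ∑ v ∈ range (2 * n + 4), ∑ w ∈ range (2 * n + 3), min v w := by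
  have even_len : Even (2 * n + 2) := (even_two_mul n).add even_two
  rw [downUpCount_add_two even_len]
  simp only [Fin.sum_univ_succ (n := 2 * n + 2), downUpCountLast_succ_eq_evenDF, ← sum_mul,
    sum_range, Fin.val_zero, Nat.min_zero, zero_mul, zero_add, mul_comm (evenDF n)]

theorem three_mul_downUpCount_two_mul_add_two (n : ℕ) :
    3 * downUpCount (2 * n + 2) (n + 1) = n * (n + 2) * evenDF (n + 1) := by
  induction n with
  | zero => simp [downUpCount_add_two, downUpCount_zero]
  | succ n ih =>
    have min_sum := three_mul_sum_range_sum_range_min (2 * n + 2)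
    calc 3 * downUpCount (2 * n + 4) (n + 2)
        = (2 * n + 4) * (3 * downUpCount (2 * n + 2) (n + 1)) + evenDF n *
            (3 * ∑ v ∈ range (2 * n + 4), ∑ w ∈ range (2 * n + 3), min v w) := by
          rw [downUpCount_two_mul_add_four]; ring
      _ = (n + 1) * (n + 3) * evenDF (n + 2) := by
          rw [ih, min_sum]
          simp only [evenDF, prod_range_succ]
          ring

theorem ncard_setOf_downUp_dbarStat_eq (n k : ℕ) :
    {σ : Perm (Fin (2 * n + 1)) | DownUp σ ∧ dbarStat n σ = k}.ncard = downUpCount (2 * n) k := by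
  rw [Set.ncard_eq_toFinset_card', Set.toFinset_ofPred, downUpCount]
  refine congrArg card (filter_congr fun σ _ => and_congr_right fun hσ => ?_)
  rw [hσ.dbarStat_eq_numLeftToRightMin]

theorem stmt16 (n : ℕ) (hn : 1 ≤ n) :
    ({σ : Equiv.Perm (Fin (2*n+1)) | DownUp σ ∧ dbarStat n σ = n}.ncard : ℚ)
      = ((n : ℚ)^2 - 1) * (evenDF n : ℚ) / 3 := by
  obtain ⟨n, rfl⟩ := Nat.exists_eq_add_one_of_ne_zero (Nat.one_le_iff_ne_zero.1 hn)
  have count : (3 * downUpCount (2 * (n + 1)) (n + 1) : ℚ) = n * (n + 2) * evenDF (n + 1) :=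
    mod_cast three_mul_downUpCount_two_mul_add_two n
  rw [ncard_setOf_downUp_dbarStat_eq]
  push_cast
  linarith
end

section
/- For every n ≥ 2, the number of down-up permutations σ of length 2n+1 with mmp^{(1,0,∅,0)}(σ) = 2 equals (2n−1)·b_{2n−1} + Σ_{k=2}^{n} C(2n−1, 2k−2) · b_{2k−3} · b_{2n−2k+1}, where b_{2m−1} denotes the number of up-down permutations of length 2m−1 (with b_1 = 1) and C(·,·) is the binomial coefficient. (Equivalently, D^{(1,0,∅,0)}_{2n+1}(x)|_{x²} = (2n−1)B_{2n−1}(1) + Σ_{k=2}^{n} C(2n−1,2k−2) B_{2k−3}(1) B_{2n−2k+1}(1).) -/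
/-- The number of up-down permutations of length `m`. -/
noncomputable def UDcount (m : ℕ) : ℕ := {σ : Equiv.Perm (Fin m) | UpDown σ}.ncard

/-!
In a down-up word of odd length every left-to-right minimum after the first letter is a valley, so a
larger letter follows it. Hence `mmp1` counts the left-to-right minima other than the greatest
letter `⊤`.

Cut a down-up word at its least letter as `u ⊥ v`. Then `u` has odd length, `v` is an arbitrary
down-up word, and `⊥` is the last left-to-right minimum, so there are two minima below `⊤` exactly
when `u` has one. That happens if `u` is a single letter other than `⊤`, which gives the first term,
or if `u = ⊤ b t` where `b` is less than every letter of the down-up word `t` of odd length, which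
gives the sum: `k` stands for `|t| = 2 * k - 3`, and the letters of `b t` form an arbitrary set of
`2 * k - 2` letters other than `⊥` and `⊤`.
-/

open Finset

section Arrangements

variable {α : Type*}

open Classical in
/-- The words that use every letter of the alphabet `S` exactly once and satisfy `P`. -/
noncomputable def arrangements (S : Finset α) (P : List α → Prop) : Finset (List α) :=
  {l ∈ (⟨S.val.lists, Multiset.lists_nodup_finset S⟩ : Finset (List α)) | P l}

variable {S : Finset α} {P Q : List α → Prop} {l : List α} {a : α}

theorem mem_arrangements : l ∈ arrangements S P ↔ (l : Multiset α) = S.val ∧ P l := by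
  simp [arrangements, eq_comm]

theorem arrangements_congr (h : ∀ l : List α, (l : Multiset α) = S.val → (P l ↔ Q l)) :
    arrangements S P = arrangements S Q := by
  ext l
  simp only [mem_arrangements]
  exact and_congr_right (h l)

theorem mem_iff_of_coe_eq_val (h : (l : Multiset α) = S.val) {x : α} : x ∈ l ↔ x ∈ S := by
  rw [← Multiset.mem_coe, h, mem_val]

theorem nodup_of_coe_eq_val (h : (l : Multiset α) = S.val) : l.Nodup := by
  rw [← Multiset.coe_nodup, h]
  exact S.nodup

theorem length_of_coe_eq_val (h : (l : Multiset α) = S.val) : l.length = #S := by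
  rw [← Multiset.coe_card, h, card_val]

theorem ncard_perm_ofFn {m : ℕ} (e : Fin m ↪ α) (P : List α → Prop) :
    {σ : Equiv.Perm (Fin m) | P (List.ofFn (e ∘ σ))}.ncard = #(arrangements (univ.map e) P) := by
  rw [← Set.ncard_coe_finset]
  refine Set.ncard_congr (fun σ _ => List.ofFn (e ∘ σ)) (fun σ hσ => ?_) (fun σ τ _ _ h => ?_)
    fun l hl => ?_
  · refine mem_arrangements.2 ⟨?_, hσ⟩
    rw [← map_univ_equiv σ, map_map, map_val, Fin.univ_val_map]
    rfl
  · exact DFunLike.coe_injective (e.injective.comp_left (List.ofFn_injective h))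
  · obtain ⟨hl, hP⟩ := mem_arrangements.1 hl
    obtain rfl : l.length = m := by simp [length_of_coe_eq_val hl]
    have hmem (i : Fin l.length) : ∃ j, e j = l.get i := by
      simpa using (mem_iff_of_coe_eq_val hl).1 (l.get_mem i)
    choose σ hσ using hmem
    have hinj : Function.Injective σ := fun i j hij =>
      List.nodup_iff_injective_get.1 (nodup_of_coe_eq_val hl) (by rw [← hσ, ← hσ, hij])
    have hword : List.ofFn (e ∘ σ) = l := by
      rw [show e ∘ σ = l.get from funext hσ, List.ofFn_get]
    exact ⟨Equiv.ofBijective σ (Finite.injective_iff_bijective.1 hinj), by simpa [hword], by simpa⟩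

variable [DecidableEq α]

theorem coe_append_cons_eq_iff {u v : List α} (ha : a ∈ S) :
    ((u ++ a :: v : List α) : Multiset α) = S.val ↔
      ∃ T ⊆ S.erase a, (u : Multiset α) = T.val ∧ (v : Multiset α) = (S.erase a \ T).val := by
  have hS : ((u ++ a :: v : List α) : Multiset α) = S.val ↔
      (u : Multiset α) + v = (S.erase a).val := by
    rw [← Multiset.coe_add, ← Multiset.cons_coe, Multiset.add_cons, erase_val]
    exact ⟨fun h => by rw [← h, Multiset.erase_cons_head],
      fun h => by rw [h, Multiset.cons_erase ha]⟩
  rw [hS]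
  constructor
  · intro h
    have hu : (u : Multiset α) ≤ (S.erase a).val := h ▸ Multiset.le_add_right _ _
    refine ⟨⟨u, Multiset.nodup_of_le hu (S.erase a).nodup⟩, val_le_iff.1 hu, rfl, ?_⟩
    rw [sdiff_val]
    exact eq_tsub_of_add_eq ((add_comm _ _).trans h)
  · rintro ⟨T, hT, hu, hv⟩
    rw [hu, hv, sdiff_val, add_tsub_cancel_of_le (val_le_iff.2 hT)]

theorem card_arrangements_append_cons (ha : a ∈ S) (P Q : List α → Prop) :
    #(arrangements S fun l => ∃ u v, l = u ++ a :: v ∧ P u ∧ Q v) =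
      ∑ T ∈ (S.erase a).powerset, #(arrangements T P) * #(arrangements (S.erase a \ T) Q) := by
  simp_rw [← card_product]
  rw [← card_sigma]
  symm
  refine card_bij (fun p _ => p.2.1 ++ a :: p.2.2) ?_ ?_ ?_
  · rintro ⟨T, u, v⟩ h
    simp only [mem_sigma, mem_powerset, mem_product, mem_arrangements] at h
    obtain ⟨hT, ⟨hu, hP⟩, hv, hQ⟩ := h
    exact mem_arrangements.2
      ⟨(coe_append_cons_eq_iff ha).2 ⟨T, hT, hu, hv⟩, u, v, rfl, hP, hQ⟩
  · rintro ⟨T, u, v⟩ h ⟨T', u', v'⟩ h' heq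
    simp only [mem_sigma, mem_powerset, mem_product, mem_arrangements] at h h'
    obtain ⟨hT, ⟨hu, -⟩, hv, -⟩ := h
    obtain ⟨-, ⟨hu', -⟩, -⟩ := h'
    have hau : a ∉ u := fun h => notMem_erase a S (hT ((mem_iff_of_coe_eq_val hu).1 h))
    have hav : a ∉ v := fun h =>
      notMem_erase a S (mem_sdiff.1 ((mem_iff_of_coe_eq_val hv).1 h)).1
    obtain ⟨rfl, -, rfl⟩ := (List.append_cons_inj_of_notMem hau hav).1 heq
    obtain rfl : T = T' := val_injective (hu.symm.trans hu')
    rfl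
  · intro l hl
    obtain ⟨hl, u, v, rfl, hP, hQ⟩ := mem_arrangements.1 hl
    obtain ⟨T, hT, hu, hv⟩ := (coe_append_cons_eq_iff ha).1 hl
    exact ⟨⟨T, u, v⟩, by simp [mem_arrangements, *], rfl⟩

theorem card_arrangements_cons (ha : a ∈ S) (P : List α → Prop) :
    #(arrangements S fun l => ∃ t, l = a :: t ∧ P t) = #(arrangements (S.erase a) P) := by
  rw [← card_map (s := arrangements (S.erase a) P) ⟨List.cons a, List.cons_injective⟩]
  congr 1
  ext l
  simp only [mem_arrangements, mem_map, Function.Embedding.coeFn_mk]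
  constructor
  · rintro ⟨hl, t, rfl, hP⟩
    exact ⟨t, ⟨by rw [erase_val, ← hl, ← Multiset.cons_coe, Multiset.erase_cons_head], hP⟩, rfl⟩
  · rintro ⟨t, ⟨ht, hP⟩, rfl⟩
    exact ⟨by rw [← Multiset.cons_coe, ht, erase_val, Multiset.cons_erase ha], t, rfl, hP⟩

end Arrangements

section Zigzag

variable {α : Type*}

/-- A word `a₁ a₂ a₃ …` is a zigzag for `r` if `r a₁ a₂`, `r a₃ a₂`, `r a₃ a₄`, …; so zigzags for
`<` are the up-down words and zigzags for `>` the down-up words. -/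
def Zigzag (r : α → α → Prop) : List α → Prop
  | [] => True
  | [_] => True
  | a :: b :: l => r a b ∧ Zigzag (flip r) (b :: l)

theorem zigzag_ofFn_iff {m : ℕ} {r : α → α → Prop} {w : Fin m → α} :
    Zigzag r (List.ofFn w) ↔ ∀ i : Fin m, ∀ h : i.val + 1 < m,
      if Even i.val then r (w i) (w ⟨i.val + 1, h⟩) else r (w ⟨i.val + 1, h⟩) (w i) := by
  induction m generalizing r with
  | zero => simp [Zigzag]
  | succ m ih =>
    cases m with
    | zero => exact ⟨fun _ i h => by omega, fun _ => trivial⟩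
    | succ m =>
      have hcons : Zigzag r (List.ofFn w) ↔
          r (w 0) (w 1) ∧ Zigzag (flip r) (List.ofFn fun i => w i.succ) := by
        simp [List.ofFn_succ, Zigzag]
      rw [hcons, ih, Fin.forall_fin_succ (n := m + 1)]
      refine and_congr (by simp) (forall_congr' fun i => ?_)
      by_cases hi : Even i.val <;> simp [hi, Nat.even_add_one, flip]

theorem zigzag_cons_iff_of_forall {r : α → α → Prop} {a : α} {l : List α} (h : ∀ x ∈ l, r a x) :
    Zigzag r (a :: l) ↔ Zigzag (flip r) l := by
  cases l with
  | nil => simp [Zigzag]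
  | cons b l => simp [Zigzag, h b]

theorem downUp_iff_zigzag {m : ℕ} {σ : Equiv.Perm (Fin m)} :
    DownUp σ ↔ Zigzag (· > ·) (List.ofFn σ) :=
  (zigzag_ofFn_iff (r := (· > ·)) (w := σ)).symm

theorem upDown_iff_zigzag_of_strictAnti [Preorder α] {m : ℕ} {σ : Equiv.Perm (Fin m)}
    {e : Fin m → α} (he : StrictAnti e) :
    UpDown σ ↔ Zigzag (· > ·) (List.ofFn (e ∘ σ)) := by
  simp [zigzag_ofFn_iff, UpDown, he.lt_iff_gt]

theorem zigzag_append_cons_iff [Preorder α] {a : α} {v : List α} (hv : ∀ x ∈ v, a < x) :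
    ∀ {u : List α}, u ≠ [] → (∀ x ∈ u, a < x) →
      (Zigzag (· > ·) (u ++ a :: v) ↔ Odd u.length ∧ Zigzag (· > ·) u ∧ Zigzag (· > ·) v)
  | [b], _, hu => by
    have hb : a < b := hu b (by simp)
    have : Zigzag (flip (· > ·)) (a :: v) ↔ Zigzag (· > ·) v := zigzag_cons_iff_of_forall hv
    simp [Zigzag, hb, this]
  | [b, c], _, hu => by
    have hc : a < c := hu c (by simp)
    simp [Zigzag, flip, hc.not_gt, Nat.not_odd_iff_even]
  | b :: c :: d :: u, _, hu => by
    have ih := zigzag_append_cons_iff hv (u := d :: u) (by simp)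
      fun x hx => hu x (by simp only [List.mem_cons] at hx ⊢; tauto)
    simp only [List.cons_append] at ih
    have hflip : flip (flip (· > ·)) = ((· > ·) : α → α → Prop) := rfl
    have hodd : Odd (b :: c :: d :: u).length ↔ Odd (d :: u).length := by
      simp [Nat.odd_add_one]
    simp only [List.cons_append, Zigzag, hflip, ih, hodd]
    tauto

theorem card_arrangements_zigzag [LinearOrder α] (S : Finset α) :
    #(arrangements S (Zigzag (· > ·))) = UDcount #S := by
  let e : Fin #S ↪ α := Fin.revPerm.toEmbedding.trans (S.orderEmbOfFin rfl).toEmbedding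
  have he : univ.map e = S := by
    rw [← map_map, map_univ_equiv, map_orderEmbOfFin_univ]
  have he' : StrictAnti e := fun i j h => by simpa [e]
  simp_rw [UDcount, upDown_iff_zigzag_of_strictAnti he']
  rw [ncard_perm_ofFn, he]

end Zigzag

section LeftToRightMinima

variable {α : Type*} [LinearOrder α]

/-- The number of left-to-right minima of a word that are less than `c`. In the recursive call, `c`
is lowered to the least letter read so far. -/
def lrMinCountBelow (c : α) : List α → ℕ
  | [] => 0
  | a :: l => (if a < c then 1 else 0) + lrMinCountBelow (min c a) l

theorem lrMinCountBelow_ofFn {m : ℕ} (c : α) (w : Fin m → α) :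
    lrMinCountBelow c (List.ofFn w) = #{i | w i < c ∧ ∀ j < i, w i < w j} := by
  induction m generalizing c with
  | zero => simp [lrMinCountBelow]
  | succ m ih =>
    have hsucc (i : Fin m) : (w i.succ < c ∧ ∀ j < i.succ, w i.succ < w j) ↔
        w i.succ < min c (w 0) ∧ ∀ j < i, w i.succ < w j.succ := by
      simp only [Fin.forall_fin_succ (n := m), Fin.succ_pos, Fin.succ_lt_succ_iff, forall_const,
        lt_min_iff, and_assoc]
    simp only [List.ofFn_succ, lrMinCountBelow, ih, Fin.card_filter_univ_succ', hsucc,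
      Fin.not_lt_zero, false_imp_iff, implies_true, and_true]

theorem lrMinCountBelow_eq_zero_iff {c : α} {l : List α} :
    lrMinCountBelow c l = 0 ↔ ∀ x ∈ l, c ≤ x := by
  induction l with
  | nil => simp [lrMinCountBelow]
  | cons a l ih =>
    by_cases h : a < c
    · simp [lrMinCountBelow, h]
    · simp [lrMinCountBelow, ih, not_lt.1 h]

theorem lrMinCountBelow_append_cons {a c : α} {u v : List α} (hac : a < c)
    (hu : ∀ x ∈ u, a < x) (hv : ∀ x ∈ v, a < x) :
    lrMinCountBelow c (u ++ a :: v) = lrMinCountBelow c u + 1 := by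
  induction u generalizing c with
  | nil =>
    have hzero : lrMinCountBelow a v = 0 := lrMinCountBelow_eq_zero_iff.2 fun x hx => (hv x hx).le
    simp [lrMinCountBelow, hac, hac.le, hzero]
  | cons b u ih =>
    simp only [List.mem_cons, forall_eq_or_imp] at hu
    rw [List.cons_append, lrMinCountBelow, lrMinCountBelow, ih (lt_min hac hu.1) hu.2, add_assoc]

theorem DownUp.odd_of_forall_lt {m : ℕ} {σ : Equiv.Perm (Fin (m + 1))} (hσ : DownUp σ)
    {i : Fin (m + 1)} (hi : i ≠ 0) (hmin : ∀ j < i, σ i < σ j) : Odd i.val := by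
  obtain ⟨j, rfl⟩ := Fin.exists_succ_eq.2 hi
  by_contra hodd
  have hj : ¬ Even j.castSucc.val := by simpa [Nat.even_add_one] using hodd
  have hstep := hσ j.castSucc (Nat.succ_lt_succ j.isLt)
  rw [if_neg hj] at hstep
  exact (hmin _ j.castSucc_lt_succ).not_gt hstep

theorem DownUp.matches1_iff {m : ℕ} (hm : Even m) {σ : Equiv.Perm (Fin (m + 1))} (hσ : DownUp σ)
    {i : Fin (m + 1)} : Matches1 σ i ↔ σ i < ⊤ ∧ ∀ j < i, σ i < σ j := by
  constructor
  · rintro ⟨⟨j, -, hj⟩, hmin⟩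
    push Not at hmin
    exact ⟨hj.trans_le le_top, fun j hji => (hmin j hji).lt_of_ne (σ.injective.ne hji.ne')⟩
  · rintro ⟨htop, hmin⟩
    refine ⟨?_, fun ⟨j, hji, hj⟩ => (hmin j hji).not_gt hj⟩
    obtain rfl | hi := eq_or_ne i 0
    · refine ⟨σ.symm ⊤, Fin.pos_of_ne_zero fun h => htop.ne ?_, by simpa⟩
      rw [← h, Equiv.apply_symm_apply]
    · have hodd : Odd i.val := hσ.odd_of_forall_lt hi hmin
      have hlt : i.val + 1 < m + 1 := by grind
      have hstep := hσ i hlt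
      rw [if_neg (Nat.not_even_iff_odd.2 hodd)] at hstep
      exact ⟨⟨i + 1, hlt⟩, Nat.lt_succ_self _, hstep⟩

theorem DownUp.mmp1_eq_lrMinCountBelow {m : ℕ} (hm : Even m) {σ : Equiv.Perm (Fin (m + 1))}
    (hσ : DownUp σ) : mmp1 σ = lrMinCountBelow ⊤ (List.ofFn σ) := by
  simp only [mmp1, hσ.matches1_iff hm, lrMinCountBelow_ofFn, Set.ncard_eq_toFinset_card',
    Set.toFinset_ofPred]

theorem ncard_downUp_mmp1_eq {m : ℕ} (hm : Even m) (k : ℕ) :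
    {σ : Equiv.Perm (Fin (m + 1)) | DownUp σ ∧ mmp1 σ = k}.ncard =
      #(arrangements (univ : Finset (Fin (m + 1))) fun l =>
        Zigzag (· > ·) l ∧ lrMinCountBelow ⊤ l = k) := by
  have hword (σ : Equiv.Perm (Fin (m + 1))) : (DownUp σ ∧ mmp1 σ = k) ↔
      Zigzag (· > ·) (List.ofFn σ) ∧ lrMinCountBelow ⊤ (List.ofFn σ) = k := by
    rw [← downUp_iff_zigzag]
    exact and_congr_right fun hσ => by rw [hσ.mmp1_eq_lrMinCountBelow hm]
  simp_rw [hword]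
  simpa using ncard_perm_ofFn (Function.Embedding.refl (Fin (m + 1)))
    fun l => Zigzag (· > ·) l ∧ lrMinCountBelow ⊤ l = k

end LeftToRightMinima

section Count

theorem card_arrangements_singleton {α : Type*} (T : Finset α) :
    #(arrangements T fun u => ∃ a, u = [a]) = if #T = 1 then 1 else 0 := by
  split_ifs with h
  · obtain ⟨a, rfl⟩ := card_eq_one.1 h
    refine card_eq_one.2 ⟨[a], ?_⟩
    ext u
    simp +contextual [mem_arrangements]
  · refine card_eq_zero.2 (eq_empty_of_forall_notMem fun u hu => h ?_)
    obtain ⟨hu, a, rfl⟩ := mem_arrangements.1 hu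
    simp [← length_of_coe_eq_val hu]

variable {α : Type*} [LinearOrder α]

theorem card_arrangements_odd_zigzag (S : Finset α) :
    #(arrangements S fun t => Odd t.length ∧ Zigzag (· > ·) t) =
      if Odd #S then UDcount #S else 0 := by
  split_ifs with h
  · rw [← card_arrangements_zigzag]
    congr 1
    exact arrangements_congr fun l hl => by simp [length_of_coe_eq_val hl, h]
  · refine card_eq_zero.2 (eq_empty_of_forall_notMem fun u hu => h ?_)
    obtain ⟨hu, hodd, -⟩ := mem_arrangements.1 hu
    rwa [← length_of_coe_eq_val hu]

/-- The words made of their least letter followed by a down-up word of odd length: the possible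
continuations after a first letter `⊤` in an `OddDownUpOneMin` word. -/
def MinThenOddDownUp (l : List α) : Prop :=
  ∃ b t, l = b :: t ∧ (∀ x ∈ t, b < x) ∧ Odd t.length ∧ Zigzag (· > ·) t

theorem card_arrangements_minThenOddDownUp (S : Finset α) :
    #(arrangements S MinThenOddDownUp) =
      if Even #S ∧ #S ≠ 0 then UDcount (#S - 1) else 0 := by
  obtain rfl | hS := S.eq_empty_or_nonempty
  · rw [if_neg (by simp), card_eq_zero]
    refine eq_empty_of_forall_notMem fun l hl => ?_
    obtain ⟨hl, b, t, rfl, -⟩ := mem_arrangements.1 hl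
    simp at hl
  · have hmin : arrangements S MinThenOddDownUp = arrangements S fun l =>
        ∃ t, l = S.min' hS :: t ∧ Odd t.length ∧ Zigzag (· > ·) t := by
      refine arrangements_congr fun l hl => ⟨?_, ?_⟩
      · rintro ⟨b, t, rfl, hb, ht⟩
        have hbS : b ∈ S := (mem_iff_of_coe_eq_val hl).1 List.mem_cons_self
        have hle : ∀ x ∈ S, b ≤ x := fun x hx => by
          obtain rfl | hx := List.mem_cons.1 ((mem_iff_of_coe_eq_val hl).2 hx)
          exacts [le_rfl, (hb x hx).le]
        exact ⟨t, by rw [(min'_eq_iff S hS b).2 ⟨hbS, hle⟩], ht⟩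
      · rintro ⟨t, rfl, ht⟩
        refine ⟨_, t, rfl, fun x hx => ?_, ht⟩
        have hxS : x ∈ S := (mem_iff_of_coe_eq_val hl).1 (List.mem_cons_of_mem _ hx)
        exact (S.min'_le x hxS).lt_of_ne
          (ne_of_mem_of_not_mem hx (List.nodup_cons.1 (nodup_of_coe_eq_val hl)).1).symm
    rw [hmin, card_arrangements_cons (S.min'_mem hS), card_arrangements_odd_zigzag,
      card_erase_of_mem (S.min'_mem hS)]
    have := hS.card_pos
    congr 1
    grind

section OrderTop

variable [OrderTop α]

/-- The down-up words of odd length with a single left-to-right minimum below `⊤`: the possible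
prefixes before `⊥` in a down-up word with two left-to-right minima below `⊤`. -/
def OddDownUpOneMin (u : List α) : Prop :=
  Odd u.length ∧ Zigzag (· > ·) u ∧ lrMinCountBelow ⊤ u = 1

theorem oddDownUpOneMin_iff {u : List α} (hu : u.Nodup) :
    OddDownUpOneMin u ↔ (∃ a ≠ ⊤, u = [a]) ∨ ∃ t, u = ⊤ :: t ∧ MinThenOddDownUp t := by
  match u, hu with
  | [], _ => simp [OddDownUpOneMin, lrMinCountBelow]
  | [a], _ => simp [OddDownUpOneMin, lrMinCountBelow, Zigzag, MinThenOddDownUp, lt_top_iff_ne_top]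
  | a :: b :: t, hu =>
    have hbt : b ∉ t := by simp_all
    have hmin : (∀ x ∈ t, b ≤ x) ↔ ∀ x ∈ t, b < x :=
      forall₂_congr fun x hx => (ne_of_mem_of_not_mem hx hbt).symm.le_iff_lt
    have hcount (hba : b < a) : lrMinCountBelow ⊤ (a :: b :: t) = 1 ↔ a = ⊤ ∧ ∀ x ∈ t, b < x := by
      rw [← hmin, ← lrMinCountBelow_eq_zero_iff]
      have hb : b < ⊤ := hba.trans_le le_top
      by_cases ha : a = ⊤
      · simp [lrMinCountBelow, hb, hb.le, ha]
      · simp [lrMinCountBelow, hba, hba.le, ha, lt_top_iff_ne_top.2 ha]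
    have hodd : Odd (a :: b :: t).length ↔ Odd t.length := by simp [Nat.odd_add_one]
    constructor
    · rintro ⟨hlen, ⟨hba, hz⟩, hc⟩
      obtain ⟨rfl, hb⟩ := (hcount hba).1 hc
      exact Or.inr ⟨_, rfl, b, t, rfl, hb, hodd.1 hlen, (zigzag_cons_iff_of_forall hb).1 hz⟩
    · rintro (⟨_, -, h⟩ | ⟨_, h, _, _, rfl, hb, hlen, hz⟩)
      · simp at h
      · simp only [List.cons.injEq] at h
        obtain ⟨rfl, rfl, rfl⟩ := h
        have hb_top : b < ⊤ := lt_top_iff_ne_top.2 fun h => by simp_all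
        exact ⟨hodd.2 hlen, ⟨hb_top, (zigzag_cons_iff_of_forall hb).2 hz⟩,
          (hcount hb_top).2 ⟨rfl, hb⟩⟩

theorem card_arrangements_oddDownUpOneMin_of_top_notMem {T : Finset α} (hT : ⊤ ∉ T) :
    #(arrangements T OddDownUpOneMin) = if #T = 1 then 1 else 0 := by
  rw [← card_arrangements_singleton]
  congr 1
  refine arrangements_congr fun u hu => ?_
  have htop : ⊤ ∉ u := by rwa [mem_iff_of_coe_eq_val hu]
  rw [oddDownUpOneMin_iff (nodup_of_coe_eq_val hu)]
  constructor
  · rintro (⟨a, -, rfl⟩ | ⟨t, rfl, -⟩)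
    · exact ⟨a, rfl⟩
    · exact absurd List.mem_cons_self htop
  · rintro ⟨a, rfl⟩
    exact Or.inl ⟨a, by simpa [eq_comm] using htop, rfl⟩

theorem card_arrangements_insert_top_oddDownUpOneMin {T : Finset α} (hT : ⊤ ∉ T) :
    #(arrangements (insert ⊤ T) OddDownUpOneMin) =
      if Even #T ∧ #T ≠ 0 then UDcount (#T - 1) else 0 := by
  rw [← card_arrangements_minThenOddDownUp, ← erase_insert hT,
    ← card_arrangements_cons (mem_insert_self ⊤ T), erase_insert hT]
  congr 1
  refine arrangements_congr fun u hu => ?_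
  have htop : ⊤ ∈ u := (mem_iff_of_coe_eq_val hu).2 (mem_insert_self ⊤ T)
  rw [oddDownUpOneMin_iff (nodup_of_coe_eq_val hu)]
  refine or_iff_right ?_
  rintro ⟨a, ha, rfl⟩
  exact ha (List.mem_singleton.1 htop).symm

theorem sum_powerset_card_oddDownUpOneMin {R : Finset α} (htop : ⊤ ∉ R) :
    ∑ T ∈ R.powerset, #(arrangements T OddDownUpOneMin) * UDcount #(insert ⊤ R \ T) =
      #R * UDcount #R := by
  calc _ = ∑ T ∈ R.powerset, if #T = 1 then UDcount #R else 0 := by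
        refine sum_congr rfl fun T hT => ?_
        rw [mem_powerset] at hT
        rw [card_arrangements_oddDownUpOneMin_of_top_notMem fun h => htop (hT h),
          card_sdiff_of_subset (hT.trans (subset_insert _ _)), card_insert_of_notMem htop]
        split_ifs with h <;> simp [h]
    _ = ∑ j ∈ range (#R + 1), if j = 1 then #R * UDcount #R else 0 := by
        rw [sum_powerset_apply_card fun j => if j = 1 then UDcount #R else 0]
        exact sum_congr rfl fun j _ => by split_ifs with h <;> simp [h]
    _ = #R * UDcount #R := by
        rw [sum_ite_eq']
        split_ifs with h
        · rfl
        · rw [show #R = 0 by simpa using h, zero_mul]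

theorem sum_powerset_card_insert_top_oddDownUpOneMin {R : Finset α} (htop : ⊤ ∉ R) :
    ∑ T ∈ R.powerset, #(arrangements (insert ⊤ T) OddDownUpOneMin) *
        UDcount #(insert ⊤ R \ insert ⊤ T) =
      ∑ j ∈ range (#R + 1), if Even j ∧ j ≠ 0 then
        (#R).choose j * UDcount (j - 1) * UDcount (#R - j) else 0 := by
  let f (j : ℕ) : ℕ := if Even j ∧ j ≠ 0 then UDcount (j - 1) * UDcount (#R - j) else 0
  calc _ = ∑ T ∈ R.powerset, f #T := by
        refine sum_congr rfl fun T hT => ?_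
        rw [mem_powerset] at hT
        have htopT : ⊤ ∉ T := fun h => htop (hT h)
        rw [card_arrangements_insert_top_oddDownUpOneMin htopT,
          card_sdiff_of_subset (insert_subset_insert _ hT), card_insert_of_notMem htop,
          card_insert_of_notMem htopT, Nat.add_sub_add_right, ite_mul, zero_mul]
    _ = _ := by
        rw [sum_powerset_apply_card f]
        simp only [f, smul_eq_mul, mul_ite, mul_zero, mul_assoc]

end OrderTop

variable [BoundedOrder α] [Fintype α] [Nontrivial α]

theorem zigzag_and_lrMinCountBelow_eq_two_iff {l : List α}
    (hl : (l : Multiset α) = (univ : Finset α).val) :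
    (Zigzag (· > ·) l ∧ lrMinCountBelow ⊤ l = 2) ↔
      ∃ u v, l = u ++ ⊥ :: v ∧ OddDownUpOneMin u ∧ Zigzag (· > ·) v := by
  have hsplit {u v : List α} (h : l = u ++ ⊥ :: v) :
      (Zigzag (· > ·) l ∧ lrMinCountBelow ⊤ l = 2) ↔
        OddDownUpOneMin u ∧ Zigzag (· > ·) v := by
    subst h
    have hnodup := nodup_of_coe_eq_val hl
    rw [List.nodup_middle, List.nodup_cons, List.mem_append, not_or] at hnodup
    obtain ⟨⟨hbu, hbv⟩, -⟩ := hnodup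
    have hu : ∀ x ∈ u, ⊥ < x := fun x hx => bot_lt_iff_ne_bot.2 (ne_of_mem_of_not_mem hx hbu)
    have hv : ∀ x ∈ v, ⊥ < x := fun x hx => bot_lt_iff_ne_bot.2 (ne_of_mem_of_not_mem hx hbv)
    rw [lrMinCountBelow_append_cons bot_lt_top hu hv, OddDownUpOneMin]
    obtain rfl | hne := eq_or_ne u []
    · simp [lrMinCountBelow]
    · rw [zigzag_append_cons_iff hv hne hu]
      simp only [Nat.reduceEqDiff]
      tauto
  obtain ⟨u, v, rfl⟩ := List.append_of_mem ((mem_iff_of_coe_eq_val hl).2 (mem_univ ⊥))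
  constructor
  · exact fun h => ⟨u, v, rfl, (hsplit rfl).1 h⟩
  · rintro ⟨u', v', h, h'⟩
    exact (hsplit h).2 h'

theorem card_arrangements_zigzag_lrMinCountBelow_eq_two {m : ℕ} (hm : Fintype.card α = m + 2) :
    #(arrangements (univ : Finset α) fun l => Zigzag (· > ·) l ∧ lrMinCountBelow ⊤ l = 2) =
      m * UDcount m + ∑ j ∈ range (m + 1), if Even j ∧ j ≠ 0 then
        m.choose j * UDcount (j - 1) * UDcount (m - j) else 0 := by
  let R : Finset α := (univ.erase ⊥).erase ⊤
  have hmem : (⊤ : α) ∈ univ.erase ⊥ := by simp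
  have htop : ⊤ ∉ R := notMem_erase _ _
  have hR : #R = m := by simp [R, card_erase_of_mem hmem, hm]
  rw [arrangements_congr fun l hl => zigzag_and_lrMinCountBelow_eq_two_iff hl,
    card_arrangements_append_cons (mem_univ ⊥), ← insert_erase hmem, sum_powerset_insert htop]
  simp only [card_arrangements_zigzag]
  rw [sum_powerset_card_oddDownUpOneMin htop, sum_powerset_card_insert_top_oddDownUpOneMin htop, hR]

end Count

theorem sum_range_even_eq_sum_Icc {M : Type*} [AddCommMonoid M] (n : ℕ) (f : ℕ → M) :
    ∑ j ∈ range (2 * n), (if Even j ∧ j ≠ 0 then f j else 0) = ∑ k ∈ Icc 2 n, f (2 * k - 2) := by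
  rw [← sum_filter]
  symm
  apply sum_nbij' (fun k => 2 * k - 2) (fun j => j / 2 + 1) <;> grind

theorem stmt18 (n : ℕ) (hn : 2 ≤ n) :
    {σ : Equiv.Perm (Fin (2*n+1)) | DownUp σ ∧ mmp1 σ = 2}.ncard
      = (2*n - 1) * UDcount (2*n - 1)
        + ∑ k ∈ Finset.Icc 2 n,
            (2*n - 1).choose (2*k - 2) * UDcount (2*k - 3) * UDcount (2*n - 2*k + 1) := by
  have hnontrivial : Nontrivial (Fin (2 * n + 1)) := Fin.nontrivial_iff_two_le.2 (by omega)
  have hcard : Fintype.card (Fin (2 * n + 1)) = 2 * n - 1 + 2 := by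
    rw [Fintype.card_fin]
    omega
  rw [ncard_downUp_mmp1_eq (even_two_mul n),
    card_arrangements_zigzag_lrMinCountBelow_eq_two hcard, Nat.sub_add_cancel (by omega),
    sum_range_even_eq_sum_Icc]
  congr 1
  refine sum_congr rfl fun k hk => ?_
  have hk' := mem_Icc.1 hk
  rw [show 2 * n - 1 - (2 * k - 2) = 2 * n - 2 * k + 1 by omega, Nat.sub_sub]
end
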